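/- arXiv:1611.08470 — 4 statements merged into one kernel-verified Lean document; each statement's English description precedes it below -/
import Mathlib

section
/- Let n ≥ 1 and r ≥ 1 be integers. For every r-multipartition λ = (λ^{(1)},…,λ^{(r)}) of n, one has Σ_{i=1}^{r} ( r·|λ^{(i)}| − i·ℓ(λ^{(i)}) ) ≤ r·n − 1, where ℓ(μ) denotes the number of nonzero parts of the partition μ (equivalently, the first part of the transposed partition μᵗ); moreover equality holds if and only if λ^{(1)} is the one-row partition (n) and λ^{(i)} = ∅ for all i ≥ 2. -/
/-!
Each part of `lam i` costs `w i` in the exponent, so the exponent is `c * n` minus the weighted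
number of parts. That number is positive as soon as `n ≠ 0`, and if `i₀` is the only index of
weight one, it equals one exactly when there is a single part and this part sits at `i₀`; its size
must then be `n`.
-/

theorem card_eq_one_iff_eq_singleton_sum {M : Type*} [AddCommMonoid M] {s : Multiset M} :
    s.card = 1 ↔ s = {s.sum} := by
  refine ⟨fun hcard ↦ ?_, fun hs ↦ Multiset.card_eq_one.2 ⟨_, hs⟩⟩
  obtain ⟨a, rfl⟩ := Multiset.card_eq_one.1 hcard
  rw [Multiset.sum_singleton]

section WeightedLength

variable {ι α : Type*} [Fintype ι]

/-- The number of parts of a family of multisets, a part of `lam i` being counted `w i` times. For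
an `r`-multipartition and `w i = i + 1` on `Fin r`, this is the sum `∑ i · ℓ(lam^{(i)})` of the
paper, whose indices start at one. -/
def weightedLength (w : ι → ℕ) (lam : ι → Multiset α) : ℕ :=
  ∑ i, w i * (lam i).card

theorem weightedLength_eq_zero_iff {w : ι → ℕ} (hw : ∀ i, w i ≠ 0) {lam : ι → Multiset α} :
    weightedLength w lam = 0 ↔ ∀ i, lam i = 0 := by
  simp [weightedLength, hw]

theorem mul_card_le_weightedLength (w : ι → ℕ) (lam : ι → Multiset α) (i : ι) :
    w i * (lam i).card ≤ weightedLength w lam :=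
  Finset.single_le_sum_of_canonicallyOrdered (f := fun i ↦ w i * (lam i).card) (Finset.mem_univ i)

theorem weightedLength_eq_mul_card {w : ι → ℕ} {i₀ : ι} {lam : ι → Multiset α}
    (hlam : ∀ i ≠ i₀, lam i = 0) : weightedLength w lam = w i₀ * (lam i₀).card :=
  Fintype.sum_eq_single i₀ fun i hi ↦ by rw [hlam i hi, Multiset.card_zero, mul_zero]

theorem weightedLength_eq_one_iff {w : ι → ℕ} {i₀ : ι} (hw₀ : w i₀ = 1)
    (hw : ∀ i ≠ i₀, 1 < w i) {lam : ι → Multiset α} :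
    weightedLength w lam = 1 ↔ (lam i₀).card = 1 ∧ ∀ i ≠ i₀, lam i = 0 := by
  constructor
  · intro hone
    have hzero (i : ι) (hi : i ≠ i₀) : lam i = 0 := by
      have hle : w i * (lam i).card ≤ 1 := (mul_card_le_weightedLength w lam i).trans_eq hone
      by_contra hne
      have hcard : 1 ≤ (lam i).card := Multiset.card_pos.2 hne
      exact hle.not_gt ((hw i hi).trans_le (Nat.le_mul_of_pos_right _ hcard))
    rw [weightedLength_eq_mul_card hzero, hw₀, one_mul] at hone
    exact ⟨hone, hzero⟩
  · rintro ⟨hcard, hzero⟩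
    rw [weightedLength_eq_mul_card hzero, hw₀, one_mul, hcard]

theorem sum_mul_sum_sub_mul_card {R : Type*} [Ring R] (c : R) (w : ι → ℕ)
    (lam : ι → Multiset ℕ) :
    ∑ i, (c * ((lam i).sum : R) - (w i : R) * ((lam i).card : R)) =
      c * ((∑ i, (lam i).sum : ℕ) : R) - (weightedLength w lam : R) := by
  simp only [weightedLength, Finset.sum_sub_distrib, ← Finset.mul_sum, Nat.cast_sum, Nat.cast_mul]

end WeightedLength

theorem multipartition_top_exponent_general {ι : Type*} [Fintype ι] (c : ℤ) {w : ι → ℕ} {i₀ : ι}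
    (hw₀ : w i₀ = 1) (hw : ∀ i ≠ i₀, 1 < w i) {n : ℕ} (hn : n ≠ 0) {lam : ι → Multiset ℕ}
    (hsize : ∑ i, (lam i).sum = n) :
    ∑ i, (c * ((lam i).sum : ℤ) - (w i : ℤ) * ((lam i).card : ℤ)) ≤ c * (n : ℤ) - 1 ∧
    (∑ i, (c * ((lam i).sum : ℤ) - (w i : ℤ) * ((lam i).card : ℤ)) = c * (n : ℤ) - 1 ↔
      lam i₀ = {n} ∧ ∀ i ≠ i₀, lam i = 0) := by
  have hw_ne (i : ι) : w i ≠ 0 := by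
    obtain rfl | hi := eq_or_ne i i₀
    · exact hw₀ ▸ one_ne_zero
    · exact (hw i hi).ne_bot
  have hlength_ne : weightedLength w lam ≠ 0 := by
    rw [Ne, weightedLength_eq_zero_iff hw_ne]
    intro hzero
    exact hn (by simp [← hsize, hzero])
  have hlength_one : weightedLength w lam = 1 ↔ lam i₀ = {n} ∧ ∀ i ≠ i₀, lam i = 0 := by
    rw [weightedLength_eq_one_iff hw₀ hw]
    refine and_congr_left fun hzero ↦ ?_
    have hsum : (lam i₀).sum = n := by
      rw [← hsize, Fintype.sum_eq_single i₀ fun i hi ↦ by rw [hzero i hi, Multiset.sum_zero]]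
    rw [card_eq_one_iff_eq_singleton_sum, hsum]
  rw [sum_mul_sum_sub_mul_card, hsize, ← hlength_one]
  omega

/-- For every `r`-multipartition `lam` of `n` (each `lam i` is a multiset of
positive parts, sizes summing to `n`),
`∑_{i=1}^{r} (r·|lam^{(i)}| − i·ℓ(lam^{(i)})) ≤ r·n − 1`, with equality iff `lam^{(1)} = (n)`
and all other components are empty. -/
theorem multipartition_top_exponent (n r : ℕ) (hn : 1 ≤ n) (hr : 0 < r)
    (lam : Fin r → Multiset ℕ)
    (hpos : ∀ i : Fin r, ∀ x ∈ lam i, 0 < x)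
    (hsize : ∑ i : Fin r, (lam i).sum = n) :
    (∑ i : Fin r, ((r : ℤ) * ((lam i).sum : ℤ) - (((i : ℕ) : ℤ) + 1) * ((lam i).card : ℤ)))
        ≤ (r : ℤ) * (n : ℤ) - 1 ∧
    ((∑ i : Fin r, ((r : ℤ) * ((lam i).sum : ℤ) - (((i : ℕ) : ℤ) + 1) * ((lam i).card : ℤ)))
        = (r : ℤ) * (n : ℤ) - 1 ↔
      (lam ⟨0, hr⟩ = {n} ∧ ∀ i : Fin r, 1 ≤ (i : ℕ) → lam i = 0)) := by
  have hw (i : Fin r) (hi : i ≠ ⟨0, hr⟩) : 1 < (i : ℕ) + 1 :=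
    Nat.lt_add_of_pos_left (Nat.pos_of_ne_zero (Fin.val_ne_of_ne hi))
  simpa [Fin.ext_iff, Nat.one_le_iff_ne_zero] using
    multipartition_top_exponent_general (r : ℤ) (w := fun i : Fin r ↦ (i : ℕ) + 1)
      (i₀ := ⟨0, hr⟩) rfl hw (Nat.one_le_iff_ne_zero.1 hn) hsize
end

section
/- Let k be a field, let A and B be k-vector spaces, let J ⊆ A be a subspace, and let I₁, I₂ ⊆ B be subspaces. Inside the tensor product B ⊗ A (writing U ⊗ V for the image in B ⊗ A of the tensor product of subspaces U ⊆ B and V ⊆ A under the map induced by the inclusions), one has the identity (B ⊗ J + I₁ ⊗ A) ∩ (I₂ ⊗ A) = I₂ ⊗ J + (I₁ ∩ I₂) ⊗ A. -/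
/-!
The quotient map `B ⊗ A → (B ⧸ I₁) ⊗ (A ⧸ J)` has kernel `B ⊗ J + I₁ ⊗ A`. Its restriction along
`I₂ ⊗ A → B ⊗ A` is the tensor product of `I₂ → B ⧸ I₁`, with kernel `I₁ ∩ I₂`, and `A → A ⧸ J`.
Flatness of `A ⧸ J` keeps the image of `I₂` in `B ⧸ I₁` embedded after tensoring, so the kernel of
the restriction is given by the same formula.
-/

open scoped TensorProduct

/-- The image of `U ⊗ V` in `B ⊗[k] A`, for subspaces `U ⊆ B`, `V ⊆ A`. -/
noncomputable def tensorImage {k B A : Type*} [Field k]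
    [AddCommGroup B] [Module k B] [AddCommGroup A] [Module k A]
    (U : Submodule k B) (V : Submodule k A) : Submodule k (B ⊗[k] A) :=
  LinearMap.range (TensorProduct.map U.subtype V.subtype)

open LinearMap TensorProduct

section Semiring

variable {R M N P : Type*} [CommSemiring R] [AddCommMonoid M] [Module R M]
  [AddCommMonoid N] [Module R N] [AddCommMonoid P] [Module R P]

theorem range_rTensor_subtype (p : Submodule R M) :
    range (p.subtype.rTensor N) = range (mapIncl p (⊤ : Submodule R N)) := by
  simp only [rTensor, range_map, Submodule.range_subtype, range_id]

theorem range_lTensor_subtype (q : Submodule R N) :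
    range (q.subtype.lTensor M) = range (mapIncl (⊤ : Submodule R M) q) := by
  simp only [lTensor, range_map, Submodule.range_subtype, range_id]

theorem map_rTensor_range_mapIncl (f : M →ₗ[R] P) (p : Submodule R M) (q : Submodule R N) :
    (range (mapIncl p q)).map (f.rTensor N) = range (mapIncl (p.map f) q) := by
  rw [range_mapIncl, range_mapIncl, Submodule.map_map₂, Submodule.map₂_map_left]
  rfl

end Semiring

section Ring

variable {R M N P Q : Type*} [CommRing R] [AddCommGroup M] [Module R M] [AddCommGroup N]
  [Module R N] [AddCommGroup P] [Module R P] [AddCommGroup Q] [Module R Q]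

theorem ker_tensorMap_of_surjective {g : M →ₗ[R] P} {h : N →ₗ[R] Q}
    (hg : Function.Surjective g) (hh : Function.Surjective h) :
    ker (map g h) = range (mapIncl ⊤ (ker h)) ⊔ range (mapIncl (ker g) ⊤) := by
  rw [map_ker (exact_subtype_ker_map g) hg (exact_subtype_ker_map h) hh,
    range_lTensor_subtype, range_rTensor_subtype]

theorem ker_tensorMap_of_flat [Module.Flat R Q] (g : M →ₗ[R] P) {h : N →ₗ[R] Q}
    (hh : Function.Surjective h) :
    ker (map g h) = range (mapIncl ⊤ (ker h)) ⊔ range (mapIncl (ker g) ⊤) := by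
  have factor : map g h = (range g).subtype.rTensor Q ∘ₗ map g.rangeRestrict h := by
    rw [rTensor_comp_map, subtype_comp_codRestrict]
  have inj : Function.Injective ((range g).subtype.rTensor Q) :=
    Module.Flat.rTensor_preserves_injective_linearMap _ (range g).injective_subtype
  rw [factor, ker_comp_of_ker_eq_bot _ (ker_eq_bot.mpr inj),
    ker_tensorMap_of_surjective g.surjective_rangeRestrict hh, ker_rangeRestrict]

end Ring

theorem tensor_subspace_modular_identity_general {R B A : Type*} [CommRing R]
    [AddCommGroup B] [Module R B] [AddCommGroup A] [Module R A]
    (J : Submodule R A) [Module.Flat R (A ⧸ J)] (I₁ I₂ : Submodule R B) :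
    (range (mapIncl (⊤ : Submodule R B) J) ⊔ range (mapIncl I₁ (⊤ : Submodule R A)))
        ⊓ range (mapIncl I₂ (⊤ : Submodule R A))
      = range (mapIncl I₂ J) ⊔ range (mapIncl (I₁ ⊓ I₂) (⊤ : Submodule R A)) := by
  let ι := I₂.subtype.rTensor A
  calc
    _ = range ι ⊓ ker (map I₁.mkQ J.mkQ) := by
      rw [ker_tensorMap_of_surjective I₁.mkQ_surjective J.mkQ_surjective, Submodule.ker_mkQ,
        Submodule.ker_mkQ, range_rTensor_subtype, inf_comm]
    _ = (ker (map (I₁.mkQ ∘ₗ I₂.subtype) J.mkQ)).map ι := by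
      rw [← Submodule.map_comap_eq, ← ker_comp, map_comp_rTensor]
    _ = (range (mapIncl ⊤ J) ⊔ range (mapIncl (I₁.comap I₂.subtype) ⊤)).map ι := by
      rw [ker_tensorMap_of_flat _ J.mkQ_surjective, ker_comp, Submodule.ker_mkQ, Submodule.ker_mkQ]
    _ = _ := by
      rw [Submodule.map_sup, map_rTensor_range_mapIncl, map_rTensor_range_mapIncl,
        Submodule.map_subtype_top, Submodule.map_comap_subtype, inf_comm]

/-- `(B ⊗ J + I₁ ⊗ A) ∩ (I₂ ⊗ A) = I₂ ⊗ J + (I₁ ∩ I₂) ⊗ A` inside `B ⊗[k] A`. -/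
theorem tensor_subspace_modular_identity {k B A : Type*} [Field k]
    [AddCommGroup B] [Module k B] [AddCommGroup A] [Module k A]
    (J : Submodule k A) (I₁ I₂ : Submodule k B) :
    (tensorImage (⊤ : Submodule k B) J ⊔ tensorImage I₁ (⊤ : Submodule k A))
        ⊓ tensorImage I₂ (⊤ : Submodule k A)
      = tensorImage I₂ J ⊔ tensorImage (I₁ ⊓ I₂) (⊤ : Submodule k A) :=
  tensor_subspace_modular_identity_general J I₁ I₂
end

section
/- Fix an integer m ≥ 1 and a partition τ (viewed as a weakly decreasing finitely supported function j ↦ τ_j from the positive integers to the nonnegative integers). Call a pair (τ′, τ″) of partitions an m-division of τ if τ_j = m·τ′_j + τ″_j for every j. Then among all m-divisions of τ there exists a pair (τ′, τ″) whose quotient size |τ′| = Σ_j τ′_j is maximal, and this maximizing pair is unique: if (σ′, σ″) is any m-division of τ with |σ′| ≥ |ρ′| for every m-division (ρ′, ρ″) of τ, then σ′ = τ′ and σ″ = τ″. -/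
/-- A partition, viewed as a weakly decreasing finitely supported function from the
positive integers to the nonnegative integers. -/
def IsPartitionFun (τ : ℕ+ → ℕ) : Prop :=
  Antitone τ ∧ (Function.support τ).Finite

/-- The size of a partition-function: the sum of its values. -/
noncomputable def partSize (τ : ℕ+ → ℕ) : ℕ := ∑ᶠ j, τ j

/-- `(τ', τ'')` is an `m`-division of `τ` if both are partitions and
`τ_j = m·τ'_j + τ''_j` for all `j`. -/
def IsMDivision (m : ℕ) (τ τ' τ'' : ℕ+ → ℕ) : Prop :=
  IsPartitionFun τ' ∧ IsPartitionFun τ'' ∧ ∀ j, τ j = m * τ' j + τ'' j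

/-!
The `m`-divisions of `τ` are closed under `(τ' ⊔ σ', τ'' ⊓ σ'')`, because at every `j` the larger
quotient goes with the smaller remainder. Hence two quotients of maximal size both agree with their
supremum, so they are equal. A maximum exists because every quotient is dominated by `τ`.
-/

section Finsum

variable {ι M : Type*} [AddCommMonoid M] [PartialOrder M] [IsOrderedCancelAddMonoid M] {f g : ι → M}

theorem eq_of_le_of_finsum_le (hfg : f ≤ g) (hf : f.support.Finite) (hg : g.support.Finite)
    (hsum : ∑ᶠ j, g j ≤ ∑ᶠ j, f j) : f = g := by
  classical
  set s := hf.toFinset ∪ hg.toFinset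
  have hfs : f.support ⊆ s := by simp [s]
  have hgs : g.support ⊆ s := by simp [s]
  rw [finsum_eq_sum_of_support_subset _ hgs, finsum_eq_sum_of_support_subset _ hfs] at hsum
  have heq_on : ∀ j ∈ s, f j = g j :=
    (Finset.sum_eq_sum_iff_of_le fun j _ => hfg j).mp
      ((Finset.sum_le_sum fun j _ => hfg j).antisymm hsum)
  funext j
  by_cases hj : j ∈ s
  · exact heq_on j hj
  · rw [Function.notMem_support.mp fun h => hj (hfs h),
      Function.notMem_support.mp fun h => hj (hgs h)]

end Finsum

section PDivision

variable {ι : Type*} [Preorder ι]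

/-- Order-reversing functions to `ℕ` with finite support, i.e. Stanley's `P`-partitions; the
partitions `IsPartitionFun` are the case `ι = ℕ+`. -/
def IsPPartition (τ : ι → ℕ) : Prop :=
  Antitone τ ∧ τ.support.Finite

/-- Division with remainder of a `P`-partition by `m`; `IsMDivision` is the case `ι = ℕ+`. -/
def IsPDivision (m : ℕ) (τ τ' τ'' : ι → ℕ) : Prop :=
  IsPPartition τ' ∧ IsPPartition τ'' ∧ ∀ j, τ j = m * τ' j + τ'' j

/-- An `m`-division whose quotient has the largest size among all `m`-divisions of `τ`. -/
def IsMaximalPDivision (m : ℕ) (τ τ' τ'' : ι → ℕ) : Prop :=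
  IsPDivision m τ τ' τ'' ∧ ∀ ρ' ρ'', IsPDivision m τ ρ' ρ'' → ∑ᶠ j, ρ' j ≤ ∑ᶠ j, τ' j

variable {m : ℕ} {τ τ' τ'' σ' σ'' : ι → ℕ}

theorem IsPPartition.zero : IsPPartition (0 : ι → ℕ) :=
  ⟨antitone_const, by simp⟩

theorem IsPPartition.sup (hτ : IsPPartition τ) (hτ' : IsPPartition τ') : IsPPartition (τ ⊔ τ') :=
  ⟨hτ.1.sup hτ'.1, (hτ.2.union hτ'.2).subset (Function.support_sup τ τ')⟩

theorem IsPPartition.inf (hτ : IsPPartition τ) (hτ' : IsPPartition τ') : IsPPartition (τ ⊓ τ') :=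
  ⟨hτ.1.inf hτ'.1, (hτ.2.union hτ'.2).subset (Function.support_inf τ τ')⟩

theorem IsPPartition.isPDivision_zero (hτ : IsPPartition τ) : IsPDivision m τ 0 τ :=
  ⟨.zero, hτ, by simp⟩

namespace IsPDivision

theorem sup_inf (hτ : IsPDivision m τ τ' τ'') (hσ : IsPDivision m τ σ' σ'') :
    IsPDivision m τ (τ' ⊔ σ') (τ'' ⊓ σ'') := by
  refine ⟨hτ.1.sup hσ.1, hτ.2.1.inf hσ.2.1, fun j => ?_⟩
  have hτj := hτ.2.2 j
  have hσj := hσ.2.2 j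
  rw [Pi.sup_apply, Pi.inf_apply]
  rcases le_total (τ' j) (σ' j) with hle | hle
  · have hmul := Nat.mul_le_mul_left m hle
    have hrem : σ'' j ≤ τ'' j := by omega
    rw [sup_of_le_right hle, inf_of_le_right hrem, hσj]
  · have hmul := Nat.mul_le_mul_left m hle
    have hrem : τ'' j ≤ σ'' j := by omega
    rw [sup_of_le_left hle, inf_of_le_left hrem, hτj]

theorem quotient_le (h : IsPDivision m τ τ' τ'') (hm : 1 ≤ m) : τ' ≤ τ := fun j =>
  calc τ' j ≤ m * τ' j := Nat.le_mul_of_pos_left _ hm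
    _ ≤ m * τ' j + τ'' j := Nat.le_add_right _ _
    _ = τ j := (h.2.2 j).symm

theorem remainder_eq (hτ : IsPDivision m τ τ' τ'') (hσ : IsPDivision m τ τ' σ'') :
    τ'' = σ'' :=
  funext fun j => Nat.add_left_cancel ((hτ.2.2 j).symm.trans (hσ.2.2 j))

end IsPDivision

namespace IsMaximalPDivision

theorem quotient_sup_eq (hτ : IsMaximalPDivision m τ τ' τ'') (hσ : IsPDivision m τ σ' σ'') :
    τ' ⊔ σ' = τ' := by
  have hsup := hτ.1.sup_inf hσ
  exact (eq_of_le_of_finsum_le le_sup_left hτ.1.1.2 hsup.1.2 (hτ.2 _ _ hsup)).symm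

theorem unique (hσ : IsMaximalPDivision m τ σ' σ'') (hτ : IsMaximalPDivision m τ τ' τ'') :
    σ' = τ' ∧ σ'' = τ'' := by
  obtain rfl : σ' = τ' := by
    rw [← hσ.quotient_sup_eq hτ.1, sup_comm, hτ.quotient_sup_eq hσ.1]
  exact ⟨rfl, hσ.1.remainder_eq hτ.1⟩

end IsMaximalPDivision

theorem IsPPartition.exists_isMaximalPDivision (hτ : IsPPartition τ) (hm : 1 ≤ m) :
    ∃ τ' τ'', IsMaximalPDivision m τ τ' τ'' := by
  let sizes : Set ℕ := {n | ∃ τ' τ'', IsPDivision m τ τ' τ'' ∧ ∑ᶠ j, τ' j = n}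
  have sizes_nonempty : sizes.Nonempty := ⟨_, 0, τ, hτ.isPDivision_zero, rfl⟩
  have sizes_le : ∑ᶠ j, τ j ∈ upperBounds sizes := by
    rintro _ ⟨τ', τ'', h, rfl⟩
    exact finsum_le_finsum' h.1.2 hτ.2 (h.quotient_le hm)
  obtain ⟨_, ⟨τ', τ'', h, rfl⟩, hmax⟩ :=
    BddAbove.exists_isGreatest_of_nonempty ⟨_, sizes_le⟩ sizes_nonempty
  exact ⟨τ', τ'', h, fun ρ' ρ'' hρ => hmax ⟨ρ', ρ'', hρ, rfl⟩⟩

theorem exists_unique_maximal_m_division_general (hm : 1 ≤ m) (hτ : IsPPartition τ) :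
    ∃ τ' τ'', IsMaximalPDivision m τ τ' τ'' ∧
      ∀ σ' σ'', IsMaximalPDivision m τ σ' σ'' → σ' = τ' ∧ σ'' = τ'' := by
  obtain ⟨τ', τ'', hmax⟩ := hτ.exists_isMaximalPDivision hm
  exact ⟨τ', τ'', hmax, fun _ _ hσ => hσ.unique hmax⟩

end PDivision

/-- among all `m`-divisions of a partition `τ` there is one whose quotient has
maximal size, and the maximizing pair is unique. -/
theorem exists_unique_maximal_m_division (m : ℕ) (hm : 1 ≤ m)
    (τ : ℕ+ → ℕ) (hτ : IsPartitionFun τ) :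
    ∃ τ' τ'' : ℕ+ → ℕ, IsMDivision m τ τ' τ'' ∧
      (∀ ρ' ρ'' : ℕ+ → ℕ, IsMDivision m τ ρ' ρ'' → partSize ρ' ≤ partSize τ') ∧
      (∀ σ' σ'' : ℕ+ → ℕ, IsMDivision m τ σ' σ'' →
        (∀ ρ' ρ'' : ℕ+ → ℕ, IsMDivision m τ ρ' ρ'' → partSize ρ' ≤ partSize σ') →
        σ' = τ' ∧ σ'' = τ'') := by
  obtain ⟨τ', τ'', hmax, huniq⟩ := exists_unique_maximal_m_division_general hm hτ
  exact ⟨τ', τ'', hmax.1, hmax.2, fun σ' σ'' hσ hσmax => huniq σ' σ'' ⟨hσ, hσmax⟩⟩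
end

section
/- Let k be a field, V a k-vector space, W ⊆ V a subspace, and n ≥ 1 an integer. Inside the n-fold tensor power V^{⊗n}, for each i ∈ {1,…,n} let W_i denote the image of V ⊗ … ⊗ W ⊗ … ⊗ V (with W in the i-th slot), and for a subset Λ ⊆ {1,…,n} let W_Λ := Σ_{i∈Λ} W_i and let W^Λ denote the image of the tensor product whose i-th factor is W for i ∈ Λ and V for i ∉ Λ. Then for every finite family Λ₁,…,Λ_p of subsets of {1,…,n}, one has ⋂_{j=1}^{p} W_{Λ_j} = Σ_{Λ'} W^{Λ'}, where the sum on the right runs over all subsets Λ' ⊆ {1,…,n} satisfying Λ' ∩ Λ_j ≠ ∅ for every j = 1,…,p. -/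
open scoped TensorProduct

/-- The image in `V^{⊗n}` of the tensor product of the subspaces `U i ⊆ V`. -/
noncomputable def piTensorImage {k V : Type*} [Field k] [AddCommGroup V] [Module k V]
    {n : ℕ} (U : Fin n → Submodule k V) : Submodule k (⨂[k] _ : Fin n, V) :=
  LinearMap.range (PiTensorProduct.map fun i => (U i).subtype)

/-!
Choose projections `π i` onto the `W i`. Expanding the identity `⨂ (π i + (1 - π i))` of the tensor
product gives a sum, over sets of slots `S`, of operators with `π` in the slots of `S` and `1 - π`
elsewhere. The term of `S` has its range in `W^S`, and it kills every `W_Λ` with `Λ` disjoint from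
`S`, since `1 - π i` kills `W i`. So on the intersection only transversal `S` contribute.
-/

section CommSemiring

open LinearMap PiTensorProduct

variable {ι R : Type*} [CommSemiring R]
  {M N : ι → Type*} [∀ i, AddCommMonoid (M i)] [∀ i, Module R (M i)]
  [∀ i, AddCommMonoid (N i)] [∀ i, Module R (N i)]

theorem range_map_le_range_mapIncl {f : ∀ i, M i →ₗ[R] N i} {U : ∀ i, Submodule R (N i)}
    (h : ∀ i, range (f i) ≤ U i) :
    range (PiTensorProduct.map f) ≤ range (mapIncl U) := by
  have factor : PiTensorProduct.map f = mapIncl U ∘ₗ PiTensorProduct.map fun i =>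
      (f i).codRestrict (U i) fun x => h i (mem_range_self (f i) x) := by
    rw [mapIncl, ← map_comp]
    simp only [subtype_comp_codRestrict]
  rw [factor]
  exact range_comp_le_range _ _

theorem range_mapIncl_mono {U U' : ∀ i, Submodule R (M i)} (h : U ≤ U') :
    range (mapIncl U) ≤ range (mapIncl U') :=
  range_map_le_range_mapIncl fun i => (U i).range_subtype.trans_le (h i)

theorem range_mapIncl_le_ker_map {f : ∀ i, M i →ₗ[R] N i} {U : ∀ i, Submodule R (M i)} {i : ι}
    (h : U i ≤ ker (f i)) :
    range (mapIncl U) ≤ ker (PiTensorProduct.map f) := by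
  have comp_eq_zero : f i ∘ₗ (U i).subtype = 0 :=
    range_le_ker_iff.mp ((U i).range_subtype.trans_le h)
  rw [range_le_ker_iff, mapIncl, ← map_comp]
  exact (mapMultilinear R (fun i => U i) N).map_coord_zero i comp_eq_zero

variable [DecidableEq ι]

/-- The submodule `W^S` of the tensor product of the `M i`: the image of the tensor product whose
`i`-th factor is `W i` for `i ∈ S` and `M i` for `i ∉ S`. In particular `W_i` is
`slotTensor W {i}`. -/
noncomputable def slotTensor (W : ∀ i, Submodule R (M i)) (S : Finset ι) :
    Submodule R (⨂[R] i, M i) :=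
  range (mapIncl fun i => if i ∈ S then W i else ⊤)

theorem slotTensor_antitone (W : ∀ i, Submodule R (M i)) : Antitone (slotTensor W) := by
  refine fun S T hST => range_mapIncl_mono fun i => ?_
  by_cases hi : i ∈ S
  · simp [hi, hST hi]
  · simp [hi]

theorem range_map_piecewise_le_slotTensor {S : Finset ι} {f g : ∀ i, M i →ₗ[R] N i}
    {W : ∀ i, Submodule R (N i)} (hf : ∀ i ∈ S, range (f i) ≤ W i) :
    range (PiTensorProduct.map (S.piecewise f g)) ≤ slotTensor W S := by
  refine range_map_le_range_mapIncl fun i => ?_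
  by_cases hi : i ∈ S
  · simpa [hi] using hf i hi
  · simp [hi]

theorem iSup_slotTensor_singleton_le_ker_map_piecewise {S T : Finset ι}
    {f g : ∀ i, M i →ₗ[R] N i} {W : ∀ i, Submodule R (M i)} (hST : Disjoint S T)
    (hg : ∀ i ∈ T, W i ≤ ker (g i)) :
    ⨆ i ∈ T, slotTensor W {i} ≤ ker (PiTensorProduct.map (S.piecewise f g)) := by
  refine iSup₂_le fun i hi => range_mapIncl_le_ker_map (i := i) ?_
  have hiS : i ∉ S := Finset.disjoint_right.mp hST hi
  simpa [hiS] using hg i hi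

end CommSemiring

section CommRing

open LinearMap PiTensorProduct

variable {ι R : Type*} [DecidableEq ι] [CommRing R]
  {M : ι → Type*} [∀ i, AddCommGroup (M i)] [∀ i, Module R (M i)]

theorem sum_map_piecewise_id_sub [Fintype ι] (f : ∀ i, M i →ₗ[R] M i) :
    ∑ S : Finset ι, PiTensorProduct.map (S.piecewise f fun i => .id - f i) = .id := by
  have expand := (mapMultilinear R M M).map_add_univ f fun i => .id - f i
  have add_eq_id : (f + fun i => .id - f i) = fun i => .id :=
    funext fun i => add_sub_cancel (f i) .id
  rw [add_eq_id] at expand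
  exact expand.symm.trans PiTensorProduct.map_id

theorem inf_sum_eq_sup_transversal_general [Finite ι] {J : Sort*}
    (W : ∀ i, Submodule R (M i)) (hW : ∀ i, IsComplemented (W i)) (Λ : J → Finset ι) :
    ⨅ j, ⨆ i ∈ Λ j, slotTensor W {i} =
      ⨆ S ∈ {S : Finset ι | ∀ j, (S ∩ Λ j).Nonempty}, slotTensor W S := by
  cases nonempty_fintype ι
  apply le_antisymm
  · intro x hx
    choose C hC using hW
    let π i := (W i).projection (C i) (hC i)
    have le_ker_id_sub_π (i : ι) : W i ≤ ker (.id - π i) := fun w hw => by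
      simp [π, Submodule.projection_apply_of_mem_left (hC i) hw]
    rw [← id_apply (R := R) x, ← sum_map_piecewise_id_sub π, LinearMap.sum_apply]
    refine sum_mem fun S _ => ?_
    by_cases hS : ∀ j, (S ∩ Λ j).Nonempty
    · refine Submodule.mem_iSup_of_mem S (Submodule.mem_iSup_of_mem hS ?_)
      exact range_map_piecewise_le_slotTensor
        (fun i _ => (Submodule.range_projection (hC i)).le) (mem_range_self _ x)
    · obtain ⟨j, hj⟩ := not_forall.mp hS
      have disj : Disjoint S (Λ j) :=
        Finset.disjoint_iff_inter_eq_empty.mpr (Finset.not_nonempty_iff_eq_empty.mp hj)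
      have x_mem_ker := iSup_slotTensor_singleton_le_ker_map_piecewise (f := π) disj
        (fun i _ => le_ker_id_sub_π i) ((Submodule.mem_iInf _).mp hx j)
      rw [mem_ker.mp x_mem_ker]
      exact zero_mem _
  · refine iSup₂_le fun S hS => le_iInf fun j => ?_
    obtain ⟨i, hi⟩ := hS j
    obtain ⟨hiS, hiΛ⟩ := Finset.mem_inter.mp hi
    exact (slotTensor_antitone W (Finset.singleton_subset_iff.mpr hiS)).trans
      (le_iSup₂_of_le i hiΛ le_rfl)

end CommRing

theorem slotTensor_const_eq_piTensorImage {k V : Type*} [Field k] [AddCommGroup V] [Module k V]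
    {n : ℕ} (W : Submodule k V) (S : Finset (Fin n)) :
    slotTensor (fun _ => W) S = piTensorImage fun i => if i ∈ S then W else ⊤ :=
  rfl

/-- inside `V^{⊗n}`, with `W_i` the image of the tensor product having `W` in
the `i`-th slot and `V` elsewhere, and `W^{Λ'}` the image of the tensor product with `W`
exactly in the slots of `Λ'`, one has
`⋂_j (Σ_{i ∈ Λ_j} W_i) = Σ_{Λ' transversal to all Λ_j} W^{Λ'}`. -/
theorem inf_sum_eq_sup_transversal {k V : Type*} [Field k] [AddCommGroup V] [Module k V]
    (n : ℕ) (hn : 1 ≤ n) (W : Submodule k V)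
    (p : ℕ) (Λ : Fin p → Finset (Fin n)) :
    (⨅ j : Fin p, ⨆ i ∈ Λ j,
        piTensorImage (fun l : Fin n => if l = i then W else (⊤ : Submodule k V)))
      = ⨆ Λ' ∈ {Λ' : Finset (Fin n) | ∀ j : Fin p, (Λ' ∩ Λ j).Nonempty},
          piTensorImage (fun l : Fin n => if l ∈ Λ' then W else (⊤ : Submodule k V)) := by
  simpa only [slotTensor_const_eq_piTensorImage, Finset.mem_singleton] using
    inf_sum_eq_sup_transversal_general (fun _ => W) (fun _ => exists_isCompl W) Λ
end
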